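/- (Confinement of iterates of the interpolated family) Let ε = sup_{(P,q)∈D} max(|∂_P S(P,q)|, |∂_q S(P,q)|) and, for complex μ, let f_μ be the map defined implicitly by the generating function P·q + μS(P,q), i.e. p = P + μ ∂_q S(P,q), Q = q + μ ∂_P S(P,q). Then for every x₀ ∈ D₁, every k ∈ ℕ with k ≥ 1, and every complex μ with |μ| ≤ μ_k := δ/(2ε(k+d)), the iterates x_j = f_μ^j(x₀) are well defined and lie in D for 0 ≤ j ≤ k, and satisfy |x_j − x_{j−1}| ≤ |μ| ε for 1 ≤ j ≤ k. -/

import Mathlib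

/-- Complex phase space `ℂ^d × ℂ^d ≅ ℂ^{2d}` with the sup norm. -/
abbrev CPhase (d : ℕ) := (Fin d → ℂ) × (Fin d → ℂ)

/-- Partial gradient `∂_P S` of `S` in the first block of `d` variables. -/
noncomputable def pGrad (d : ℕ) (S : CPhase d → ℂ) (x : CPhase d) : Fin d → ℂ :=
  fun i => fderiv ℂ S x (Pi.single i 1, 0)

/-- Partial gradient `∂_q S` of `S` in the second block of `d` variables. -/
noncomputable def qGrad (d : ℕ) (S : CPhase d → ℂ) (x : CPhase d) : Fin d → ℂ :=
  fun i => fderiv ℂ S x (0, Pi.single i 1)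

open Metric in
lemma fixed_aux {E : Type*} [NormedAddCommGroup E] [NormedSpace ℂ E] [FiniteDimensional ℂ E]
    (F : E → E) (p : E) (r : ℝ) (hr : 0 ≤ r)
    (hF : ∀ P ∈ closedBall p (2 * r), DifferentiableAt ℂ F P)
    (hb : ∀ P ∈ closedBall p (2 * r), ‖F P‖ ≤ r) :
    ∃ P ∈ closedBall p r, p = P + F P := by
  have : ProperSpace E := FiniteDimensional.proper ℂ E
  have : CompleteSpace E := FiniteDimensional.complete ℂ E
  have hsub : closedBall p r ⊆ closedBall p (2 * r) := closedBall_subset_closedBall (by linarith)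
  rcases hr.eq_or_lt with h0 | hpos
  · refine ⟨p, mem_closedBall_self hr, ?_⟩
    have := hb p (mem_closedBall_self (by linarith))
    rw [← h0] at this
    simp [norm_le_zero_iff.1 this]
  -- Cauchy estimate
  have hder : ∀ P ∈ closedBall p r, ‖fderiv ℂ F P‖ ≤ 1 := by
    intro P hP
    refine ContinuousLinearMap.opNorm_le_bound _ zero_le_one fun v => ?_
    rw [one_mul]
    rcases eq_or_ne v 0 with rfl | hv
    · simp
    have hv' : 0 < ‖v‖ := norm_pos_iff.2 hv
    have hmem : ∀ c ∈ closedBall (0 : ℂ) (r / ‖v‖), P + c • v ∈ closedBall p (2 * r) := by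
      intro c hc
      rw [mem_closedBall_zero_iff, le_div_iff₀ hv'] at hc
      rw [mem_closedBall, dist_eq_norm] at hP ⊢
      calc ‖P + c • v - p‖ = ‖(P - p) + c • v‖ := by congr 1; abel
        _ ≤ ‖P - p‖ + ‖c • v‖ := norm_add_le _ _
        _ ≤ 2 * r := by rw [norm_smul]; linarith
    have hlin : ∀ c : ℂ, HasDerivAt (fun c : ℂ => P + c • v) v c := by
      intro c
      simpa using ((hasDerivAt_id c).smul_const v).const_add P
    have hg : ∀ c ∈ closedBall (0 : ℂ) (r / ‖v‖),
        HasDerivAt (fun c : ℂ => F (P + c • v)) (fderiv ℂ F (P + c • v) v) c := by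
      intro c hc
      exact (hF _ (hmem c hc)).hasFDerivAt.comp_hasDerivAt c (hlin c)
    have hR : 0 < r / ‖v‖ := by positivity
    have hd : DiffContOnCl ℂ (fun c : ℂ => F (P + c • v)) (ball 0 (r / ‖v‖)) := by
      apply DifferentiableOn.diffContOnCl
      rw [closure_ball _ hR.ne']
      intro c hc
      exact (hg c hc).differentiableAt.differentiableWithinAt
    have := Complex.norm_deriv_le_of_forall_mem_sphere_norm_le hR hd
      (C := r) (fun z hz => hb _ (hmem z (sphere_subset_closedBall hz)))
    rw [(hg 0 (mem_closedBall_self hR.le)).deriv] at this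
    simp only [zero_smul, add_zero] at this
    refine this.trans (le_of_eq ?_)
    field_simp
  have hlip : ∀ x ∈ closedBall p r, ∀ y ∈ closedBall p r, ‖F y - F x‖ ≤ ‖y - x‖ := by
    intro x hx y hy
    let _ : NormedSpace ℝ E := NormedSpace.restrictScalars ℝ ℂ E
    simpa using Convex.norm_image_sub_le_of_norm_fderiv_le (𝕜 := ℂ) (C := 1)
      (fun z hz => hF z (hsub hz)) hder (convex_closedBall p r) hx hy
  have hcont : ContinuousOn (fun P => ‖P + F P - p‖) (closedBall p r) := by
    intro z hz
    have := (hF z (hsub hz)).continuousAt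
    exact ContinuousAt.continuousWithinAt (by fun_prop)
  obtain ⟨P, hP, hmin⟩ := (isCompact_closedBall p r).exists_isMinOn
    ⟨p, mem_closedBall_self hr⟩ hcont
  refine ⟨P, hP, ?_⟩
  have key : ∀ t : ℝ, 0 ≤ t → t < 1 → ‖P + F P - p‖ ≤ (1 - t) * r := by
    intro t ht ht1
    have hmaps : Set.MapsTo (fun P => p - (t : ℂ) • F P) (closedBall p r) (closedBall p r) := by
      intro z hz
      rw [mem_closedBall, dist_eq_norm]
      have h1 := hb z (hsub hz)
      have : p - (t : ℂ) • F z - p = -((t : ℂ) • F z) := by abel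
      rw [this, norm_neg, norm_smul, Complex.norm_real, Real.norm_of_nonneg ht]
      nlinarith
    have hc : ContractingWith ⟨t, ht⟩ (hmaps.restrict _ _ _) := by
      refine ⟨by exact_mod_cast ht1, LipschitzWith.of_dist_le_mul ?_⟩
      rintro ⟨x, hx⟩ ⟨y, hy⟩
      show dist (p - (t : ℂ) • F x) (p - (t : ℂ) • F y) ≤ t * dist x y
      rw [dist_eq_norm, dist_comm, dist_eq_norm]
      have : p - (t : ℂ) • F x - (p - (t : ℂ) • F y) = (t : ℂ) • (F y - F x) := by
        rw [smul_sub]; abel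
      rw [this, norm_smul, Complex.norm_real, Real.norm_of_nonneg ht]
      exact mul_le_mul_of_nonneg_left (hlip x hx y hy) ht
    obtain ⟨z, hz, hfix, -⟩ := hc.exists_fixedPoint' isClosed_closedBall.isComplete hmaps
      (mem_closedBall_self hr) (edist_ne_top _ _)
    have hfix' : p - (t : ℂ) • F z = z := hfix
    refine (hmin hz).trans ?_
    have : z + F z - p = ((1 - t : ℝ) : ℂ) • F z := by
      nth_rewrite 1 [← hfix']
      push_cast
      rw [sub_smul, one_smul]; abel
    show ‖z + F z - p‖ ≤ _
    rw [this, norm_smul, Complex.norm_real, Real.norm_of_nonneg (by linarith)]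
    exact mul_le_mul_of_nonneg_left (hb z (hsub hz)) (by linarith)
  have hle : ‖P + F P - p‖ ≤ 0 := by
    refine le_of_forall_pos_le_add fun e he => ?_
    have hm : 0 < min 1 (e / r) := lt_min one_pos (by positivity)
    have := key (1 - min 1 (e / r)) (by linarith [min_le_left 1 (e / r)]) (by linarith)
    refine this.trans ?_
    have h2 : min 1 (e / r) * r ≤ e / r * r :=
      mul_le_mul_of_nonneg_right (min_le_right _ _) hr
    rw [div_mul_cancel₀ _ hpos.ne'] at h2
    linarith
  exact (sub_eq_zero.1 (norm_le_zero_iff.1 hle)).symm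

open Metric in
lemma step_aux (d : ℕ) (D : Set (CPhase d)) (ε : ℝ) (hε : 0 < ε)
    (S : CPhase d → ℂ) (hS : AnalyticOnNhd ℂ S D)
    (hεub : ∀ x ∈ D, max ‖pGrad d S x‖ ‖qGrad d S x‖ ≤ ε) (μ : ℂ)
    (x : CPhase d) (hx : closedBall x (2 * (‖μ‖ * ε)) ⊆ D) :
    ∃ y : CPhase d, (y.1, x.2) ∈ D ∧ x.1 = y.1 + μ • qGrad d S (y.1, x.2) ∧
      y.2 = x.2 + μ • pGrad d S (y.1, x.2) ∧ ‖y - x‖ ≤ ‖μ‖ * ε := by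
  have hr : 0 ≤ ‖μ‖ * ε := by positivity
  have hmem : ∀ P ∈ closedBall x.1 (2 * (‖μ‖ * ε)), (P, x.2) ∈ D := by
    intro P hP
    apply hx
    rw [mem_closedBall, Prod.dist_eq]
    simpa using hP
  obtain ⟨P, hP, hfix⟩ := fixed_aux (fun P => μ • qGrad d S (P, x.2)) x.1 (‖μ‖ * ε) hr
    (by
      intro P hP
      refine DifferentiableAt.fun_const_smul ?_ μ
      unfold qGrad
      rw [differentiableAt_pi]
      intro i
      have h1 : DifferentiableAt ℂ (fderiv ℂ S) (P, x.2) :=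
        (hS _ (hmem P hP)).fderiv.differentiableAt
      have h2 : DifferentiableAt ℂ (fun P : Fin d → ℂ => fderiv ℂ S (P, x.2)) P :=
        DifferentiableAt.comp (g := fderiv ℂ S) (f := fun P : Fin d → ℂ => (P, x.2)) P h1
          (by fun_prop)
      exact h2.clm_apply (differentiableAt_const _))
    (by
      intro P hP
      rw [norm_smul]
      exact mul_le_mul_of_nonneg_left ((le_max_right _ _).trans (hεub _ (hmem P hP)))
        (norm_nonneg _))
  have hPD := hmem P (closedBall_subset_closedBall (by linarith) hP)
  refine ⟨(P, x.2 + μ • pGrad d S (P, x.2)), hPD, hfix, rfl, ?_⟩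
  rw [Prod.norm_def]
  refine max_le (by simpa [dist_eq_norm] using hP) ?_
  simp only [Prod.snd_sub, add_sub_cancel_left, norm_smul]
  exact mul_le_mul_of_nonneg_left ((le_max_left _ _).trans (hεub _ hPD)) (norm_nonneg _)

/-- **Confinement of iterates of the interpolated family.**
`D₀ ⊂ ℂ^{2d}`, `D` its `δ`-neighbourhood, `D₁` its `δ/2`-neighbourhood, `S` analytic on
`D` with `|∇S| ≤ ε` there.  For complex `μ`, `f_μ` is the map generated by
`P·q + μS(P,q)`, i.e. the orbit `(x_j)` of a point `x₀` satisfies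
`(x_{j−1})_p = (x_j)_p + μ ∂_q S((x_j)_p, (x_{j−1})_q)` and
`(x_j)_q = (x_{j−1})_q + μ ∂_P S((x_j)_p, (x_{j−1})_q)`.
For every `x₀ ∈ D₁`, `k ≥ 1` and `|μ| ≤ μ_k = δ/(2ε(k+d))`, the iterates
`x_j = f_μ^j(x₀)` are well defined for `0 ≤ j ≤ k`, lie in `D`, and satisfy
`|x_j − x_{j−1}| ≤ |μ| ε`. -/
theorem confinement_of_iterates_interpolated_family (d : ℕ) (hd : 1 ≤ d)
    (D₀ : Set (CPhase d)) (δ ε : ℝ) (hδ : 0 < δ) (hε : 0 < ε)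
    (D D₁ : Set (CPhase d))
    (hD : D = Metric.cthickening δ D₀)
    (hD₁ : D₁ = Metric.cthickening (δ / 2) D₀)
    (S : CPhase d → ℂ) (hS : AnalyticOnNhd ℂ S D)
    (hεub : ∀ x ∈ D, max ‖pGrad d S x‖ ‖qGrad d S x‖ ≤ ε)
    (x₀ : CPhase d) (hx₀ : x₀ ∈ D₁)
    (k : ℕ) (hk : 1 ≤ k)
    (μ : ℂ) (hμ : ‖μ‖ ≤ δ / (2 * ε * ((k : ℝ) + d))) :
    ∃ x : ℕ → CPhase d, x 0 = x₀ ∧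
      ∀ j : ℕ, 1 ≤ j → j ≤ k →
        x j ∈ D ∧
        ((x j).1, (x (j - 1)).2) ∈ D ∧
        (x (j - 1)).1 = (x j).1 + μ • qGrad d S ((x j).1, (x (j - 1)).2) ∧
        (x j).2 = (x (j - 1)).2 + μ • pGrad d S ((x j).1, (x (j - 1)).2) ∧
        ‖x j - x (j - 1)‖ ≤ ‖μ‖ * ε := by
  have hd' : (1 : ℝ) ≤ d := by exact_mod_cast hd
  have hk' : (1 : ℝ) ≤ k := by exact_mod_cast hk
  have hr : 0 ≤ ‖μ‖ * ε := by positivity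
  have hroom : (k + 1) * (‖μ‖ * ε) ≤ δ / 2 := by
    rw [le_div_iff₀ (by positivity)] at hμ
    nlinarith
  have hball : Metric.closedBall x₀ (δ / 2) ⊆ D := by
    intro y hy
    rw [hD]
    have h1 : y ∈ Metric.cthickening (δ / 2) (Metric.cthickening (δ / 2) D₀) :=
      Metric.mem_cthickening_of_dist_le y x₀ _ _ (hD₁ ▸ hx₀) hy
    have := Metric.cthickening_cthickening_subset (by positivity) (by positivity) D₀ h1
    rwa [add_halves] at this
  have hstep : ∀ x : CPhase d, ∃ y : CPhase d, Metric.closedBall x (2 * (‖μ‖ * ε)) ⊆ D →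
      (y.1, x.2) ∈ D ∧ x.1 = y.1 + μ • qGrad d S (y.1, x.2) ∧
      y.2 = x.2 + μ • pGrad d S (y.1, x.2) ∧ ‖y - x‖ ≤ ‖μ‖ * ε := by
    intro x
    by_cases h : Metric.closedBall x (2 * (‖μ‖ * ε)) ⊆ D
    · obtain ⟨y, hy⟩ := step_aux d D ε hε S hS hεub μ x h
      exact ⟨y, fun _ => hy⟩
    · exact ⟨x, fun h' => absurd h' h⟩
  choose f hf using hstep
  have hsub : ∀ j : ℕ, j + 1 ≤ k → dist (f^[j] x₀) x₀ ≤ j * (‖μ‖ * ε) →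
      Metric.closedBall (f^[j] x₀) (2 * (‖μ‖ * ε)) ⊆ D := by
    intro j hj hdist
    have hj' : (j : ℝ) + 1 ≤ k := by exact_mod_cast hj
    refine (Metric.closedBall_subset_closedBall' ?_).trans hball
    nlinarith
  have hdist : ∀ j : ℕ, j ≤ k → dist (f^[j] x₀) x₀ ≤ j * (‖μ‖ * ε) := by
    intro j
    induction j with
    | zero => simp
    | succ j ih =>
      intro hj
      have h1 := ih (by omega)
      have h2 := (hf _ (hsub j hj h1)).2.2.2
      rw [← dist_eq_norm] at h2
      rw [Function.iterate_succ_apply']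
      push_cast
      linarith [dist_triangle (f (f^[j] x₀)) (f^[j] x₀) x₀]
  refine ⟨fun j => f^[j] x₀, rfl, ?_⟩
  intro j hj1 hjk
  obtain ⟨j, rfl⟩ : ∃ i, j = i + 1 := ⟨j - 1, by omega⟩
  have h3 := hf _ (hsub j hjk (hdist j (by omega)))
  have h4 : f^[j + 1] x₀ ∈ D := by
    apply hball
    have := hdist (j + 1) hjk
    have hj' : ((j + 1 : ℕ) : ℝ) ≤ k := by exact_mod_cast hjk
    rw [Metric.mem_closedBall]
    nlinarith
  refine ⟨h4, ?_⟩
  simp only [Nat.add_sub_cancel, Function.iterate_succ_apply']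
  exact h3
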